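/- Let μ be a permuton and let μ_ac be the absolutely continuous part of μ in the Lebesgue decomposition of μ with respect to two-dimensional Lebesgue measure on [0,1]². Then liminf_{n→∞} H_n(μ)/(n·log n) ≥ ‖μ_ac‖, where ‖μ_ac‖ denotes the total mass μ_ac([0,1]²). -/

import Mathlib

open MeasureTheory Filter

/-- The probability that `n` i.i.d. points sampled from `μ` realize the pattern `π`. -/
noncomputable def patternProb {n : ℕ} (μ : Measure (ℝ × ℝ)) (π : Equiv.Perm (Fin n)) : ℝ :=
  (n.factorial : ℝ) *
    ((Measure.pi fun _ : Fin n => μ)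
      {p : Fin n → ℝ × ℝ | ∀ i j : Fin n, i < j →
        (p i).1 < (p j).1 ∧ ((p i).2 < (p j).2 ↔ π i < π j)}).toReal

/-- Sampling entropy `H_n(μ)`. -/
noncomputable def samplingEntropy (μ : Measure (ℝ × ℝ)) (n : ℕ) : ℝ :=
  ∑ π : Equiv.Perm (Fin n), Real.negMulLog (patternProb μ π)

/-- A pre-permuton: a Borel probability measure on `ℝ²` with atomless marginals. -/
def IsPrePermuton (μ : Measure (ℝ × ℝ)) : Prop :=
  IsProbabilityMeasure μ ∧ (∀ x : ℝ, μ.map Prod.fst {x} = 0) ∧ ∀ y : ℝ, μ.map Prod.snd {y} = 0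

/-- A permuton: a Borel probability measure on `[0,1]²` with uniform marginals. -/
def IsPermuton (μ : Measure (ℝ × ℝ)) : Prop :=
  μ (Set.Icc (0:ℝ) 1 ×ˢ Set.Icc (0:ℝ) 1)ᶜ = 0 ∧
  μ.map Prod.fst = volume.restrict (Set.Icc (0:ℝ) 1) ∧
  μ.map Prod.snd = volume.restrict (Set.Icc (0:ℝ) 1)

/-!
Let `A` be a set on which `μ` is dominated by a finite product measure `α × β`. Sort `n` independent
points of `μ` by first coordinate and record, besides their pattern, the set `S` of indices of the
points that fall in `A`. Sorting `m = #S` points of a product measure along each axis costs a factor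
`m!` per axis, and sorting the other `n - m` points along the first axis costs `(n - m)!`, so each
pair (pattern, `S`) has probability at most `n! c ^ m / (m! ^ 2 (n - m)!) = n ^ (-m) e ^ O(n)`. The
joint entropy is therefore at least `E[#S] log n - O(n) = n μ(A) log n - O(n)`, and forgetting `S`,
which has at most `2 ^ n` values, costs at most `n log 2`. Hence the liminf is at least `μ(A)`. A
measure that is below `μ` and absolutely continuous with respect to a product measure is exhausted
by such sets: the sublevel sets of the density of `μ`, off a null set carrying its singular part.
-/

open scoped ENNReal Nat Topology Function Finset

section Order

variable {ι κ κ' X : Type*} [LinearOrder κ] [LinearOrder κ']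

theorem existsUnique_perm_lt_iff_lt [Finite ι] {r : ι → κ} {s : ι → κ'}
    (hr : r.Injective) (hs : s.Injective) :
    ∃! τ : Equiv.Perm ι, ∀ i j, r (τ i) < r (τ j) ↔ s i < s j := by
  have := Fintype.ofFinite ι
  let e : Set.range s ≃o Set.range r :=
    (monoEquivOfFin _ (Set.card_range_of_injective hs)).symm.trans
      (monoEquivOfFin _ (Set.card_range_of_injective hr))
  let τ : Equiv.Perm ι :=
    (Equiv.ofInjective s hs).trans (e.toEquiv.trans (Equiv.ofInjective r hr).symm)
  have hτ (i) : r (τ i) = e ⟨s i, Set.mem_range_self i⟩ := Equiv.apply_ofInjective_symm hr _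
  refine ⟨τ, fun i j => ?_, fun σ hσ => ?_⟩
  · rw [hτ, hτ, Subtype.coe_lt_coe, e.lt_iff_lt, Subtype.mk_lt_mk]
  · have hτσ (i j) : r (τ i) < r (τ j) ↔ r (σ i) < r (σ j) := by
      rw [hσ, hτ, hτ, Subtype.coe_lt_coe, e.lt_iff_lt, Subtype.mk_lt_mk]
    let _ : LinearOrder ι := LinearOrder.lift' r hr
    have hmono : StrictMono (τ.symm.trans σ) := fun i j (hij : r i < r j) =>
      (hτσ _ _).1 (by simpa using hij)
    have hid : hmono.orderIsoOfSurjective _ (τ.symm.trans σ).surjective = OrderIso.refl ι :=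
      Subsingleton.elim _ _
    ext i
    simpa using DFunLike.congr_fun hid (τ i)

/-- The event that a sample `p : ι → X` is ordered by the statistic `f` in the same way as the
indices are ordered by `r`. -/
def orderEvent (f : X → ℝ) (r : ι → κ) : Set (ι → X) :=
  {p | ∀ i j, f (p i) < f (p j) ↔ r i < r j}

variable {f : X → ℝ} {r : ι → κ}

theorem injective_comp_of_mem_orderEvent (hr : r.Injective) {p : ι → X}
    (hp : p ∈ orderEvent f r) : (f ∘ p).Injective := by
  intro i j hij
  have hle (i j : ι) (h : f (p i) = f (p j)) : r j ≤ r i :=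
    not_lt.1 fun hlt => ((hp i j).2 hlt).ne h
  exact hr ((hle j i hij.symm).antisymm (hle i j hij))

theorem pairwise_disjoint_orderEvent_comp_perm [Finite ι] (f : X → ℝ) (hr : r.Injective) :
    Pairwise (Disjoint on fun τ : Equiv.Perm ι => orderEvent f (r ∘ τ)) := by
  refine fun τ σ hne => Set.disjoint_left.2 fun p hτ hσ => hne ?_
  have hp := injective_comp_of_mem_orderEvent (hr.comp τ.injective) hτ
  exact (existsUnique_perm_lt_iff_lt hr hp).unique (fun i j => (hτ i j).symm)
    fun i j => (hσ i j).symm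

theorem iUnion_orderEvent_comp_perm [Finite ι] (f : X → ℝ) (hr : r.Injective) :
    ⋃ τ : Equiv.Perm ι, orderEvent f (r ∘ τ) = {p | (f ∘ p).Injective} := by
  refine Set.Subset.antisymm (Set.iUnion_subset fun τ p hp =>
    injective_comp_of_mem_orderEvent (hr.comp τ.injective) hp) fun p hp => ?_
  obtain ⟨τ, hτ, -⟩ := existsUnique_perm_lt_iff_lt hr hp
  exact Set.mem_iUnion.2 ⟨τ, fun i j => (hτ i j).symm⟩

variable [MeasurableSpace X]

theorem measurableSet_orderEvent [Countable ι] (hf : Measurable f) (r : ι → κ) :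
    MeasurableSet (orderEvent f r) := by
  simp only [orderEvent, Set.ofPred_forall]
  refine .iInter fun i => .iInter fun j => .iff (measurableSet_lt ?_ ?_) (.const _) <;> fun_prop

variable [Fintype ι]

theorem setLIntegral_orderEvent_comp_perm (α : Measure X) [SigmaFinite α]
    (f : X → ℝ) (r : ι → κ) (τ : Equiv.Perm ι) {N : (ι → X) → ℝ≥0∞}
    (hN : ∀ (σ : Equiv.Perm ι) p, N (p ∘ σ) = N p) :
    ∫⁻ p in orderEvent f (r ∘ τ), N p ∂(Measure.pi fun _ => α) =
      ∫⁻ p in orderEvent f r, N p ∂(Measure.pi fun _ => α) := by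
  let e : (ι → X) ≃ᵐ (ι → X) := .arrowCongr' τ.symm (.refl X)
  have he : MeasurePreserving e (Measure.pi fun _ => α) (Measure.pi fun _ => α) :=
    measurePreserving_arrowCongr' (fun _ => α) (fun _ => α) _ _ fun _ => .id _
  have hpre : e ⁻¹' orderEvent f (r ∘ τ) = orderEvent f r :=
    Set.ext fun p => (τ.surjective.forall₂ (p := fun i j => f (p i) < f (p j) ↔ r i < r j)).symm
  rw [← he.setLIntegral_comp_preimage_emb e.measurableEmbedding, hpre]
  exact lintegral_congr fun p => hN τ p

theorem factorial_mul_setLIntegral_orderEvent (α : Measure X) [SigmaFinite α] (hf : Measurable f)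
    (hr : r.Injective) {N : (ι → X) → ℝ≥0∞} (hN : ∀ (σ : Equiv.Perm ι) p, N (p ∘ σ) = N p) :
    (Fintype.card ι)! * ∫⁻ p in orderEvent f r, N p ∂(Measure.pi fun _ => α) =
      ∫⁻ p in {p | (f ∘ p).Injective}, N p ∂(Measure.pi fun _ => α) := by
  classical
  rw [← iUnion_orderEvent_comp_perm f hr,
    lintegral_iUnion (fun τ => measurableSet_orderEvent hf _)
      (pairwise_disjoint_orderEvent_comp_perm f hr), tsum_fintype]
  simp only [setLIntegral_orderEvent_comp_perm α f r _ hN, Finset.sum_const, Finset.card_univ,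
    Fintype.card_perm, nsmul_eq_mul]

theorem factorial_mul_pi_orderEvent_le (α : Measure X) [SigmaFinite α] (hf : Measurable f)
    (hr : r.Injective) :
    (Fintype.card ι)! * Measure.pi (fun _ : ι => α) (orderEvent f r) ≤
      α Set.univ ^ Fintype.card ι := by
  calc (Fintype.card ι)! * Measure.pi (fun _ : ι => α) (orderEvent f r)
      = Measure.pi (fun _ => α) {p | (f ∘ p).Injective} := by
        simpa using factorial_mul_setLIntegral_orderEvent α hf hr (N := fun _ => 1) fun _ _ => rfl
    _ ≤ Measure.pi (fun _ => α) Set.univ := measure_mono (Set.subset_univ _)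
    _ = α Set.univ ^ Fintype.card ι := by simp [Measure.pi_univ]

theorem factorial_sq_mul_pi_prod_orderEvent_inter_le (α β : Measure ℝ) [SigmaFinite α]
    [SigmaFinite β] {s : ι → κ'} (hr : r.Injective) (hs : s.Injective) :
    (Fintype.card ι)! ^ 2 * Measure.pi (fun _ : ι => α.prod β)
        (orderEvent Prod.fst r ∩ orderEvent Prod.snd s) ≤
      (α Set.univ * β Set.univ) ^ Fintype.card ι := by
  have hpre : orderEvent Prod.fst r ∩ orderEvent Prod.snd s =
      MeasurableEquiv.arrowProdEquivProdArrow ℝ ℝ ι ⁻¹' (orderEvent id r ×ˢ orderEvent id s) := rfl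
  rw [hpre, (measurePreserving_arrowProdEquivProdArrow ℝ ℝ ι (fun _ => α)
    fun _ => β).measure_preimage_equiv, Measure.prod_prod, sq, mul_mul_mul_comm, mul_pow]
  exact mul_le_mul' (factorial_mul_pi_orderEvent_le α measurable_id hr)
    (factorial_mul_pi_orderEvent_le β measurable_id hs)

theorem ae_fst_ne_snd_prod [MeasurableEq X] (μ ν : Measure X) [SFinite ν]
    [NullSingletonClass ν] : ∀ᵐ z ∂(μ.prod ν), z.1 ≠ z.2 := by
  rw [Measure.ae_prod_iff_ae_ae (p := fun z : X × X => z.1 ≠ z.2) measurableSet_diagonal.compl]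
  exact .of_forall fun x =>
    (measure_eq_zero_iff_ae_notMem.1 (measure_singleton x)).mono fun y hy h => hy h.symm

theorem map_prodMk_eval_pi (μ : Measure X) [IsProbabilityMeasure μ] {i j : ι} (hij : i ≠ j) :
    (Measure.pi fun _ : ι => μ).map (fun p => (p i, p j)) = μ.prod μ := by
  have hindep := (ProbabilityTheory.iIndepFun_pi (μ := fun _ : ι => μ) (X := fun _ => id)
    fun _ => aemeasurable_id).indepFun hij
  have hmap (k : ι) : (Measure.pi fun _ : ι => μ).map (fun p => p k) = μ :=
    (measurePreserving_eval (fun _ => μ) k).map_eq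
  simpa only [id, hmap] using (ProbabilityTheory.indepFun_iff_map_prod_eq_prod_map_map
    (measurable_pi_apply i).aemeasurable (measurable_pi_apply j).aemeasurable).1 hindep

theorem ae_injective_comp_pi (μ : Measure X) [IsProbabilityMeasure μ] (hf : Measurable f)
    [NullSingletonClass (μ.map f)] :
    ∀ᵐ p ∂(Measure.pi fun _ : ι => μ), (f ∘ p).Injective := by
  have hne (i j : ι) (hij : i ≠ j) : ∀ᵐ p ∂(Measure.pi fun _ : ι => μ), f (p i) ≠ f (p j) := by
    have hmap : (Measure.pi fun _ : ι => μ).map (fun p => (f (p i), f (p j))) =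
        (μ.map f).prod (μ.map f) := by
      rw [Measure.map_prod_map _ _ hf hf, ← map_prodMk_eval_pi μ hij,
        Measure.map_map (by fun_prop) (by fun_prop)]
      rfl
    exact ae_of_ae_map (p := fun z : ℝ × ℝ => z.1 ≠ z.2) (by fun_prop)
      (hmap ▸ ae_fst_ne_snd_prod (μ.map f) (μ.map f))
  have hall := ae_all_iff.2 fun i => ae_all_iff.2 fun j => ae_all_iff.2 (hne i j)
  exact hall.mono fun p hp i j hij => not_not.1 fun h => hp i j h hij

end Order
section Hits

variable {ι X : Type*}

/-- The event that the points of a sample lying in `A` are exactly those with index in `S`. The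
events for varying `S` partition the sample space by the hit set of `A`. -/
def hitEvent (A : Set X) (S : Finset ι) : Set (ι → X) :=
  {p | ∀ i, p i ∈ A ↔ i ∈ S}

theorem pairwise_disjoint_hitEvent (A : Set X) :
    Pairwise (Disjoint on hitEvent (ι := ι) A) := fun _ _ hne =>
  Set.disjoint_left.2 fun _ hS hT => hne (Finset.ext fun i => (hS i).symm.trans (hT i))

theorem iUnion_hitEvent [Finite ι] (A : Set X) : ⋃ S : Finset ι, hitEvent A S = Set.univ :=
  Set.eq_univ_of_forall fun p =>
    Set.mem_iUnion.2 ⟨(Set.toFinite {i | p i ∈ A}).toFinset, fun i => by simp⟩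

theorem measurableSet_hitEvent [Countable ι] [MeasurableSpace X] {A : Set X}
    (hA : MeasurableSet A) (S : Finset ι) : MeasurableSet (hitEvent A S) := by
  simp only [hitEvent, Set.ofPred_forall]
  exact .iInter fun i => .iff (measurable_pi_apply i hA) (.const _)

theorem sum_card_mul_measure_hitEvent [Fintype ι] [MeasurableSpace X] (P : Measure (ι → X))
    {A : Set X} (hA : MeasurableSet A) :
    ∑ S : Finset ι, #S * P (hitEvent A S) = ∫⁻ p, ∑ i, A.indicator 1 (p i) ∂P := by
  classical
  have hcard (S : Finset ι) (p : ι → X) (hp : p ∈ hitEvent A S) :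
      ∑ i, A.indicator (1 : X → ℝ≥0∞) (p i) = #S := by
    simp [Set.indicator_apply, hp _]
  rw [← setLIntegral_univ, ← iUnion_hitEvent A, lintegral_iUnion (measurableSet_hitEvent hA)
    (pairwise_disjoint_hitEvent A), tsum_fintype]
  refine Finset.sum_congr rfl fun S _ => ?_
  rw [setLIntegral_congr_fun (measurableSet_hitEvent hA S) (hcard S), setLIntegral_const]

end Hits

theorem pi_mono_measure {ι : Type*} [Fintype ι] {X : ι → Type*} [∀ i, MeasurableSpace (X i)]
    {α β : ∀ i, Measure (X i)} (h : ∀ i, α i ≤ β i) : Measure.pi α ≤ Measure.pi β := by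
  have houter : OuterMeasure.pi (fun i => (α i).toOuterMeasure) ≤
      OuterMeasure.pi fun i => (β i).toOuterMeasure :=
    OuterMeasure.le_pi.2 fun s _ =>
      (OuterMeasure.pi_pi_le _ s).trans (Finset.prod_le_prod' fun i _ => h i (s i))
  refine Measure.le_iff.2 fun s hs => ?_
  simpa only [Measure.pi, toMeasure_apply _ _ hs] using houter s

section Pattern

variable {ι κ κ' : Type*} [Fintype ι] [LinearOrder κ] [LinearOrder κ'] {r : ι → κ} {s : ι → κ'}
  {μ : Measure (ℝ × ℝ)} [SigmaFinite μ] {α β : Measure ℝ} [SigmaFinite α] [SigmaFinite β]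
  {A : Set (ℝ × ℝ)}

theorem factorial_sq_mul_factorial_mul_pi_orderEvent_inter_forall_mem_le
    (hA : μ.restrict A ≤ α.prod β) (hr : r.Injective) (hs : s.Injective) (q : ι → Prop) :
    (Nat.card {i // q i})! ^ 2 * (Nat.card {i // ¬q i})! * Measure.pi (fun _ : ι => μ)
        (orderEvent Prod.fst r ∩ orderEvent Prod.snd s ∩ {p | ∀ i, q i → p i ∈ A}) ≤
      (α Set.univ * β Set.univ) ^ Nat.card {i // q i} * μ Set.univ ^ Nat.card {i // ¬q i} := by
  classical
  let F : Set ({i // q i} → ℝ × ℝ) :=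
    orderEvent Prod.fst (fun i => r i) ∩ orderEvent Prod.snd fun i => s i
  let G : Set ({i // ¬q i} → ℝ × ℝ) := orderEvent Prod.fst fun i => r i
  have hF : MeasurableSet F := (measurableSet_orderEvent measurable_fst _).inter
    (measurableSet_orderEvent measurable_snd _)
  have hsplit : orderEvent Prod.fst r ∩ orderEvent Prod.snd s ∩ {p | ∀ i, q i → p i ∈ A} ⊆
      MeasurableEquiv.piEquivPiSubtypeProd (fun _ => ℝ × ℝ) q ⁻¹'
        ((F ∩ Set.univ.pi fun _ => A) ×ˢ G) := fun p ⟨⟨hfst, hsnd⟩, hmem⟩ =>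
    ⟨⟨⟨fun i j => hfst i j, fun i j => hsnd i j⟩, fun i _ => hmem i i.2⟩, fun i j => hfst i j⟩
  have hpi : Measure.pi (fun _ : ι => μ)
      (orderEvent Prod.fst r ∩ orderEvent Prod.snd s ∩ {p | ∀ i, q i → p i ∈ A}) ≤
        Measure.pi (fun _ => α.prod β) F * Measure.pi (fun _ => μ) G := by
    refine (measure_mono hsplit).trans ?_
    rw [(measurePreserving_piEquivPiSubtypeProd (fun _ => μ) q).measure_preimage_equiv,
      Measure.prod_prod, ← Measure.restrict_apply hF, Measure.restrict_pi_pi]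
    exact mul_le_mul' (pi_mono_measure (fun _ => hA) F) le_rfl
  have hF_le := factorial_sq_mul_pi_prod_orderEvent_inter_le α β
    (hr.comp (Subtype.val_injective (p := q))) (hs.comp Subtype.val_injective)
  have hG_le := factorial_mul_pi_orderEvent_le μ measurable_fst
    (hr.comp (Subtype.val_injective (p := fun i => ¬q i)))
  simp only [Nat.card_eq_fintype_card]
  calc _ ≤ (Fintype.card {i // q i})! ^ 2 * (Fintype.card {i // ¬q i})! *
        (Measure.pi (fun _ => α.prod β) F * Measure.pi (fun _ => μ) G) := by gcongr
    _ = ((Fintype.card {i // q i})! ^ 2 * Measure.pi (fun _ => α.prod β) F) *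
        ((Fintype.card {i // ¬q i})! * Measure.pi (fun _ => μ) G) := by ring
    _ ≤ _ := mul_le_mul' hF_le hG_le

theorem factorial_sq_mul_factorial_mul_pi_orderEvent_inter_hitEvent_le [DecidableEq ι]
    (hA : μ.restrict A ≤ α.prod β) (hr : r.Injective) (hs : s.Injective) (S : Finset ι) :
    (#S)! ^ 2 * (#Sᶜ)! * Measure.pi (fun _ : ι => μ)
        (orderEvent Prod.fst r ∩ orderEvent Prod.snd s ∩ hitEvent A S) ≤
      (α Set.univ * β Set.univ) ^ #S * μ Set.univ ^ #Sᶜ := by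
  have hsub : hitEvent A S ⊆ {p | ∀ i, i ∈ S → p i ∈ A} := fun _ hp i => (hp i).2
  have hle := factorial_sq_mul_factorial_mul_pi_orderEvent_inter_forall_mem_le hA hr hs (· ∈ S)
  rw [Nat.subtype_card S fun _ => .rfl, Nat.subtype_card Sᶜ fun _ => Finset.mem_compl] at hle
  refine le_trans ?_ hle
  gcongr

end Pattern

section Entropy

open Real

theorem sum_negMulLog_sub_le_negMulLog_sum {ι : Type*} [Fintype ι] {q : ι → ℝ}
    (hq : ∀ i, 0 ≤ q i) :
    ∑ i, negMulLog (q i) - (∑ i, q i) * log (Fintype.card ι) ≤ negMulLog (∑ i, q i) := by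
  rcases isEmpty_or_nonempty ι with h | h
  · simp
  set N := (Fintype.card ι : ℝ)
  have hN : 0 < N := by positivity
  have hjensen := concaveOn_negMulLog.le_map_sum (t := Finset.univ) (w := fun _ : ι => N⁻¹)
    (fun _ _ => by positivity) (by simp [N]) fun i _ => Set.mem_Ici.2 (hq i)
  simp only [smul_eq_mul, ← Finset.mul_sum] at hjensen
  rw [negMulLog_mul, inv_mul_le_iff₀ hN] at hjensen
  calc ∑ i, negMulLog (q i) - (∑ i, q i) * log N
      ≤ N * ((∑ i, q i) * negMulLog N⁻¹ + N⁻¹ * negMulLog (∑ i, q i)) - (∑ i, q i) * log N := by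
        gcongr
    _ = negMulLog (∑ i, q i) := by
        simp only [negMulLog, log_inv]
        field_simp
        ring

theorem mul_le_negMulLog_of_mul_pow_le {q N D : ℝ} {m n : ℕ} (hq : 0 ≤ q) (hN : 0 < N)
    (h : q * N ^ m ≤ D ^ n) : q * (m * log N - n * log D) ≤ negMulLog q := by
  rcases hq.eq_or_lt with rfl | hq
  · simp
  have hlog := log_le_log (by positivity) h
  rw [log_mul hq.ne' (by positivity), log_pow, log_pow] at hlog
  rw [negMulLog, neg_mul, ← mul_neg]
  gcongr
  linarith

theorem factorial_mul_mul_pow_le {n m : ℕ} (hm : m ≤ n) {c x : ℝ} (hc : 1 ≤ c) (hx : 0 ≤ x)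
    (h : (m ! : ℝ) ^ 2 * (n - m)! * x ≤ c ^ m) :
    n ! * x * n ^ m ≤ (2 * c * exp 1) ^ n := by
  have hchoose : (n ! : ℝ) = n.choose m * m ! * (n - m)! := by
    exact_mod_cast (Nat.choose_mul_factorial_mul_factorial hm).symm
  have hpow : (n : ℝ) ^ m ≤ exp n * m ! :=
    (div_le_iff₀ (by positivity)).1 (pow_div_factorial_le_exp _ n.cast_nonneg m)
  calc (n ! : ℝ) * x * n ^ m ≤ n ! * x * (exp n * m !) := by gcongr
    _ = n.choose m * ((m ! : ℝ) ^ 2 * (n - m)! * x) * exp n := by rw [hchoose]; ring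
    _ ≤ 2 ^ n * c ^ n * exp n := by
      gcongr ?_ * ?_ * _
      · exact_mod_cast n.choose_le_two_pow m
      · exact h.trans (pow_le_pow_right₀ hc hm)
    _ = (2 * c * exp 1) ^ n := by rw [mul_pow, mul_pow, exp_one_pow]

end Entropy

theorem sum_measureReal_inter_eq {κ Ω : Type*} [Fintype κ] [MeasurableSpace Ω] (ν : Measure Ω)
    [IsFiniteMeasure ν] {B : κ → Set Ω} (hB : ∀ k, MeasurableSet (B k))
    (hdisj : Pairwise (Disjoint on B)) (hcover : ∀ᵐ ω ∂ν, ω ∈ ⋃ k, B k) (s : Set Ω) :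
    ∑ k, ν.real (B k ∩ s) = ν.real s := by
  have hunion := measureReal_iUnion_fintype (μ := ν.restrict s) hdisj hB
  rw [measureReal_restrict_apply (.iUnion hB)] at hunion
  simp only [measureReal_restrict_apply (hB _)] at hunion
  rw [← hunion]
  exact measureReal_congr (hcover.mono fun ω hω => propext (and_iff_right hω))

section Approximation

variable {X : Type*} [MeasurableSpace X]

theorem restrict_rnDeriv_le_le_smul (μ ν : Measure X) [μ.HaveLebesgueDecomposition ν] {Z : Set X}
    (hZ : MeasurableSet Z) (hZ_null : μ.singularPart ν Z = 0) (c : ℝ≥0∞) :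
    μ.restrict (Z ∩ {x | μ.rnDeriv ν x ≤ c}) ≤ c • ν := by
  have hmeas : MeasurableSet {x | μ.rnDeriv ν x ≤ c} :=
    measurableSet_le (Measure.measurable_rnDeriv μ ν) measurable_const
  refine Measure.le_iff.2 fun s hs => ?_
  rw [Measure.restrict_apply hs]
  nth_rw 1 [Measure.haveLebesgueDecomposition_add μ ν]
  rw [Measure.add_apply, measure_mono_null (fun _ hx => hx.2.1) hZ_null, zero_add,
    withDensity_apply _ (hs.inter (hZ.inter hmeas))]
  calc ∫⁻ x in s ∩ (Z ∩ {x | μ.rnDeriv ν x ≤ c}), μ.rnDeriv ν x ∂ν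
      ≤ ∫⁻ _ in s ∩ (Z ∩ {x | μ.rnDeriv ν x ≤ c}), c ∂ν :=
        setLIntegral_mono measurable_const fun _ hx => hx.2.2
    _ ≤ c * ν s := by
        rw [setLIntegral_const]
        gcongr
        exact Set.inter_subset_left

theorem exists_measurableSet_restrict_le_tendsto (μ : Measure X) {ρ ν : Measure X} [SigmaFinite μ]
    [SigmaFinite ν] (hρ : ρ ≪ ν) :
    ∃ A : ℕ → Set X, (∀ k, MeasurableSet (A k) ∧ μ.restrict (A k) ≤ (k : ℝ≥0∞) • ν) ∧
      Tendsto (fun k => ρ (A k)) atTop (𝓝 (ρ Set.univ)) := by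
  obtain ⟨Z, hZ, hZ_null, hZc_null⟩ := Measure.mutuallySingular_singularPart μ ν
  let A (k : ℕ) : Set X := Z ∩ {x | μ.rnDeriv ν x ≤ k}
  have hmono : Monotone A := fun k l hkl => Set.inter_subset_inter_right _ fun _ hx =>
    Set.mem_ofPred.2 (le_trans (Set.mem_ofPred.1 hx) (Nat.cast_le.2 hkl))
  have hZ_ae : ∀ᵐ x ∂ρ, x ∈ Z := hρ.ae_le (mem_ae_iff.2 hZc_null)
  have hunion : ρ (⋃ k, A k) = ρ Set.univ := by
    refine measure_congr (eventuallyEq_univ.2 ?_)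
    filter_upwards [hZ_ae, hρ.ae_le (Measure.rnDeriv_lt_top μ ν)] with x hxZ hx
    obtain ⟨k, hk⟩ := ENNReal.exists_nat_gt hx.ne
    exact Set.mem_iUnion.2 ⟨k, hxZ, hk.le⟩
  exact ⟨A, fun k => ⟨hZ.inter (measurableSet_le (Measure.measurable_rnDeriv μ ν) measurable_const),
    restrict_rnDeriv_le_le_smul μ ν hZ hZ_null k⟩, hunion ▸ tendsto_measure_iUnion_atTop hmono⟩

end Approximation

section Sample

variable {μ : Measure (ℝ × ℝ)} {n : ℕ}

theorem IsPrePermuton.ae_injective_fst_comp (hμ : IsPrePermuton μ) :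
    ∀ᵐ p ∂(Measure.pi fun _ : Fin n => μ), (Prod.fst ∘ p).Injective :=
  have := hμ.1
  have : NullSingletonClass (μ.map Prod.fst) := ⟨hμ.2.1⟩
  ae_injective_comp_pi μ measurable_fst

theorem IsPrePermuton.ae_injective_snd_comp (hμ : IsPrePermuton μ) :
    ∀ᵐ p ∂(Measure.pi fun _ : Fin n => μ), (Prod.snd ∘ p).Injective :=
  have := hμ.1
  have : NullSingletonClass (μ.map Prod.snd) := ⟨hμ.2.2⟩
  ae_injective_comp_pi μ measurable_snd

/-- The law of `n` independent points of `μ` listed by increasing first coordinate, for a measure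
`μ` that almost surely leads to no ties. All `n!` orderings of the sample being equally likely, it
is encoded as the conditioning of the product measure on the event that the sample is sorted. -/
noncomputable def orderedSampleMeasure (μ : Measure (ℝ × ℝ)) (n : ℕ) : Measure (Fin n → ℝ × ℝ) :=
  (n ! : ℝ≥0∞) • (Measure.pi fun _ => μ).restrict (orderEvent Prod.fst id)

theorem orderedSampleMeasure_absolutelyContinuous (μ : Measure (ℝ × ℝ)) (n : ℕ) :
    orderedSampleMeasure μ n ≪ Measure.pi fun _ => μ :=
  Measure.absolutelyContinuous_of_le_smul (c := (n ! : ℝ≥0∞)) <| by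
    unfold orderedSampleMeasure
    gcongr
    exact Measure.restrict_le_self

theorem orderedSampleMeasure_real_apply {s : Set (Fin n → ℝ × ℝ)} (hs : MeasurableSet s) :
    (orderedSampleMeasure μ n).real s =
      n ! * (Measure.pi fun _ => μ).real (s ∩ orderEvent Prod.fst id) := by
  simp [orderedSampleMeasure, measureReal_ennreal_smul_apply, measureReal_restrict_apply hs]

theorem IsPrePermuton.lintegral_orderedSampleMeasure (hμ : IsPrePermuton μ)
    {N : (Fin n → ℝ × ℝ) → ℝ≥0∞} (hN : ∀ (σ : Equiv.Perm (Fin n)) p, N (p ∘ σ) = N p) :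
    ∫⁻ p, N p ∂orderedSampleMeasure μ n = ∫⁻ p, N p ∂(Measure.pi fun _ => μ) := by
  have := hμ.1
  have hsort := factorial_mul_setLIntegral_orderEvent μ measurable_fst
    (Function.injective_id (α := Fin n)) hN
  rw [Fintype.card_fin, Measure.restrict_eq_self_of_ae_mem
    (s := {p : Fin n → ℝ × ℝ | (Prod.fst ∘ p).Injective}) hμ.ae_injective_fst_comp] at hsort
  rw [orderedSampleMeasure, lintegral_smul_measure, smul_eq_mul, hsort]

theorem IsPrePermuton.isProbabilityMeasure_orderedSampleMeasure (hμ : IsPrePermuton μ) :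
    IsProbabilityMeasure (orderedSampleMeasure μ n) := by
  have := hμ.1
  constructor
  simpa using hμ.lintegral_orderedSampleMeasure (n := n) (N := fun _ => 1) fun _ _ => rfl

theorem IsPrePermuton.sum_card_mul_measureReal_hitEvent (hμ : IsPrePermuton μ)
    {A : Set (ℝ × ℝ)} (hA : MeasurableSet A) :
    ∑ S, #S * (orderedSampleMeasure μ n).real (hitEvent A S) = n * μ.real A := by
  have := hμ.1
  have := hμ.isProbabilityMeasure_orderedSampleMeasure (n := n)
  have hind : Measurable (A.indicator (1 : ℝ × ℝ → ℝ≥0∞)) := measurable_one.indicator hA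
  have hmass : ∑ S, #S * orderedSampleMeasure μ n (hitEvent A S) = n * μ A := by
    rw [sum_card_mul_measure_hitEvent _ hA,
      hμ.lintegral_orderedSampleMeasure fun σ p => Equiv.sum_comp σ fun i => A.indicator 1 (p i),
      lintegral_finsetSum _ fun i _ => by fun_prop]
    simp only [(measurePreserving_eval (fun _ : Fin n => μ) _).lintegral_comp hind,
      lintegral_indicator_one hA, Finset.sum_const, Finset.card_univ, Fintype.card_fin,
      nsmul_eq_mul]
  have hreal := congrArg ENNReal.toReal hmass
  rw [ENNReal.toReal_sum fun S _ => by finiteness] at hreal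
  simpa [measureReal_def] using hreal

theorem IsPrePermuton.patternProb_eq (hμ : IsPrePermuton μ) (π : Equiv.Perm (Fin n)) :
    patternProb μ π = (orderedSampleMeasure μ n).real (orderEvent Prod.snd π) := by
  rw [orderedSampleMeasure_real_apply (measurableSet_orderEvent measurable_snd _), patternProb,
    ← measureReal_def]
  congr 1
  refine measureReal_congr (hμ.ae_injective_snd_comp.mono fun p hp => propext ⟨?_, ?_⟩)
  · intro h
    have hfst : StrictMono (Prod.fst ∘ p) := fun i j hij => (h i j hij).1
    refine ⟨fun i j => ?_, fun i j => hfst.lt_iff_lt⟩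
    rcases lt_trichotomy i j with hij | rfl | hji
    · exact (h i j hij).2
    · simp
    · have hne := hp.ne hji.ne
      have hπ := π.injective.ne hji.ne
      have := (h j i hji).2
      simp only [Function.comp_apply] at hne
      rw [← not_iff_not, not_lt, not_lt, hne.le_iff_lt, hπ.le_iff_lt, this]
  · exact fun ⟨hsnd, hfst⟩ i j hij => ⟨(hfst i j).2 hij, hsnd i j⟩

theorem IsPrePermuton.sum_orderedSampleMeasure_real_inter (hμ : IsPrePermuton μ)
    (s : Set (Fin n → ℝ × ℝ)) :
    ∑ π : Equiv.Perm (Fin n), (orderedSampleMeasure μ n).real (orderEvent Prod.snd π ∩ s) =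
      (orderedSampleMeasure μ n).real s := by
  have := hμ.isProbabilityMeasure_orderedSampleMeasure (n := n)
  refine sum_measureReal_inter_eq _ (fun π => measurableSet_orderEvent measurable_snd _)
    (pairwise_disjoint_orderEvent_comp_perm _ Function.injective_id) ?_ s
  have hcover := iUnion_orderEvent_comp_perm (ι := Fin n) (Prod.snd : ℝ × ℝ → ℝ)
    Function.injective_id
  exact hcover.symm ▸ (orderedSampleMeasure_absolutelyContinuous μ n).ae_le hμ.ae_injective_snd_comp

theorem IsPrePermuton.sum_patternProb (hμ : IsPrePermuton μ) :
    ∑ π : Equiv.Perm (Fin n), patternProb μ π = 1 := by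
  have := hμ.isProbabilityMeasure_orderedSampleMeasure (n := n)
  simpa [hμ.patternProb_eq] using hμ.sum_orderedSampleMeasure_real_inter (n := n) Set.univ

theorem IsPrePermuton.sum_orderedSampleMeasure_real_inter_hitEvent (hμ : IsPrePermuton μ)
    {A : Set (ℝ × ℝ)} (hA : MeasurableSet A) (π : Equiv.Perm (Fin n)) :
    ∑ S, (orderedSampleMeasure μ n).real (orderEvent Prod.snd π ∩ hitEvent A S) =
      patternProb μ π := by
  have := hμ.isProbabilityMeasure_orderedSampleMeasure (n := n)
  simp only [Set.inter_comm (orderEvent Prod.snd π), hμ.patternProb_eq]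
  exact sum_measureReal_inter_eq _ (fun S => measurableSet_hitEvent hA S)
    (pairwise_disjoint_hitEvent A) (by simp [iUnion_hitEvent]) _

theorem patternProb_nonneg (μ : Measure (ℝ × ℝ)) (π : Equiv.Perm (Fin n)) :
    0 ≤ patternProb μ π := by
  unfold patternProb
  positivity

theorem IsPrePermuton.samplingEntropy_le_log_factorial (hμ : IsPrePermuton μ) (n : ℕ) :
    samplingEntropy μ n ≤ Real.log n ! := by
  simpa [hμ.sum_patternProb, Fintype.card_perm, samplingEntropy] using
    sum_negMulLog_sub_le_negMulLog_sum (patternProb_nonneg μ (n := n))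

end Sample

section LowerBound

variable {μ : Measure (ℝ × ℝ)} {α β : Measure ℝ} [IsFiniteMeasure α] [IsFiniteMeasure β]
  {A : Set (ℝ × ℝ)} {n : ℕ}

theorem orderedSampleMeasure_real_orderEvent_inter_hitEvent_mul_pow_le [IsProbabilityMeasure μ]
    (hA : MeasurableSet A) (hμA : μ.restrict A ≤ α.prod β) {c : ℝ} (hc : 1 ≤ c)
    (hαβ : α.real Set.univ * β.real Set.univ ≤ c) (π : Equiv.Perm (Fin n)) (S : Finset (Fin n)) :
    (orderedSampleMeasure μ n).real (orderEvent Prod.snd π ∩ hitEvent A S) * (n : ℝ) ^ #S ≤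
      (2 * c * Real.exp 1) ^ n := by
  have hle := ENNReal.toReal_mono (by finiteness)
    (factorial_sq_mul_factorial_mul_pi_orderEvent_inter_hitEvent_le hμA
      (Function.injective_id (α := Fin n)) π.injective S)
  simp only [ENNReal.toReal_mul, ENNReal.toReal_pow, ENNReal.toReal_natCast, ← measureReal_def,
    probReal_univ, one_pow, mul_one, Finset.card_compl, Fintype.card_fin] at hle
  rw [orderedSampleMeasure_real_apply
    ((measurableSet_orderEvent measurable_snd _).inter (measurableSet_hitEvent hA S)),
    Set.inter_right_comm, Set.inter_comm (orderEvent Prod.snd π)]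
  exact factorial_mul_mul_pow_le (card_finset_fin_le S) hc measureReal_nonneg
    (hle.trans (by gcongr))

theorem IsPrePermuton.mul_log_sub_le_samplingEntropy (hμ : IsPrePermuton μ)
    (hA : MeasurableSet A) (hμA : μ.restrict A ≤ α.prod β) {c : ℝ} (hc : 1 ≤ c)
    (hαβ : α.real Set.univ * β.real Set.univ ≤ c) (hn : n ≠ 0) :
    n * (μ.real A * Real.log n - Real.log (4 * c * Real.exp 1)) ≤ samplingEntropy μ n := by
  have := hμ.1
  have hn_pos : (0 : ℝ) < n := by positivity
  let q (π : Equiv.Perm (Fin n)) (S : Finset (Fin n)) : ℝ :=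
    (orderedSampleMeasure μ n).real (orderEvent Prod.snd π ∩ hitEvent A S)
  let D := 2 * c * Real.exp 1
  have hq (π S) : 0 ≤ q π S := measureReal_nonneg
  have hq_sum (π) : ∑ S, q π S = patternProb μ π :=
    hμ.sum_orderedSampleMeasure_real_inter_hitEvent hA π
  have hq_card : ∑ π, ∑ S, q π S * #S = n * μ.real A := by
    rw [Finset.sum_comm, ← hμ.sum_card_mul_measureReal_hitEvent hA]
    simp only [q, mul_comm (Measure.real _ _), ← Finset.mul_sum,
      hμ.sum_orderedSampleMeasure_real_inter]
  have hq_total : ∑ π, ∑ S, q π S = 1 := by simp only [hq_sum, hμ.sum_patternProb]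
  have hlog : Real.log (4 * c * Real.exp 1) = Real.log D + Real.log 2 := by
    rw [← Real.log_mul (by positivity) (by positivity)]
    congr 1
    ring
  calc n * (μ.real A * Real.log n - Real.log (4 * c * Real.exp 1))
      = ∑ π, (∑ S, q π S * (#S * Real.log n - n * Real.log D) -
          (∑ S, q π S) * (n * Real.log 2)) := by
        simp only [mul_sub, ← mul_assoc, Finset.sum_sub_distrib, ← Finset.sum_mul, hq_card,
          hq_total, hlog]
        ring
    _ ≤ ∑ π, (∑ S, Real.negMulLog (q π S) - (∑ S, q π S) * (n * Real.log 2)) := by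
        gcongr with π _ S _
        exact mul_le_negMulLog_of_mul_pow_le (hq π S) hn_pos
          (orderedSampleMeasure_real_orderEvent_inter_hitEvent_mul_pow_le hA hμA hc hαβ π S)
    _ ≤ ∑ π, Real.negMulLog (∑ S, q π S) := by
        gcongr with π _
        simpa using sum_negMulLog_sub_le_negMulLog_sum (hq π)
    _ = samplingEntropy μ n := by simp only [hq_sum, samplingEntropy]

theorem IsPrePermuton.samplingEntropy_div_le_one (hμ : IsPrePermuton μ) (n : ℕ) :
    samplingEntropy μ n / (n * Real.log n) ≤ 1 := by
  refine div_le_one_of_le₀ ((hμ.samplingEntropy_le_log_factorial n).trans ?_) (by positivity)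
  rw [← Real.log_pow]
  gcongr
  exact_mod_cast n.factorial_le_pow

theorem IsPrePermuton.measureReal_le_liminf (hμ : IsPrePermuton μ) (hA : MeasurableSet A)
    (hμA : μ.restrict A ≤ α.prod β) :
    μ.real A ≤ liminf (fun n : ℕ => samplingEntropy μ n / (n * Real.log n)) atTop := by
  obtain ⟨c, hc, hαβ⟩ : ∃ c : ℝ, 1 ≤ c ∧ α.real Set.univ * β.real Set.univ ≤ c :=
    ⟨max 1 _, le_max_left _ _, le_max_right _ _⟩
  have hlog : Tendsto (fun n : ℕ => Real.log n) atTop atTop :=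
    Real.tendsto_log_atTop.comp tendsto_natCast_atTop_atTop
  have hlim : Tendsto (fun n : ℕ => μ.real A - Real.log (4 * c * Real.exp 1) / Real.log n)
      atTop (𝓝 (μ.real A)) := by
    simpa using tendsto_const_nhds.sub (hlog.const_div_atTop _)
  rw [← hlim.liminf_eq]
  refine liminf_le_liminf ?_ hlim.isBoundedUnder_ge
    (isBoundedUnder_of ⟨1, hμ.samplingEntropy_div_le_one⟩).isCoboundedUnder_ge
  filter_upwards [hlog.eventually_gt_atTop 0, eventually_ne_atTop 0] with n hn hn0
  rw [le_div_iff₀ (by positivity)]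
  refine Eq.trans_le ?_ (hμ.mul_log_sub_le_samplingEntropy hA hμA hc hαβ hn0)
  field_simp

end LowerBound

theorem IsPermuton.isPrePermuton {μ : Measure (ℝ × ℝ)} (hμ : IsPermuton μ) : IsPrePermuton μ := by
  obtain ⟨-, hfst, hsnd⟩ := hμ
  refine ⟨⟨?_⟩, fun x => by simp [hfst], fun y => by simp [hsnd]⟩
  rw [← Set.preimage_univ (f := Prod.fst), ← Measure.map_apply measurable_fst .univ, hfst]
  simp

theorem liminf_samplingEntropy_ge_acPart_mass_general {μ ρ : Measure (ℝ × ℝ)}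
    (hμ : IsPrePermuton μ) {α β : Measure ℝ} [SFinite α] [SFinite β] (hρμ : ρ ≤ μ)
    (hρ : ρ ≪ α.prod β) :
    (ρ Set.univ).toReal ≤
      liminf (fun n : ℕ => samplingEntropy μ n / (n * Real.log n)) atTop := by
  have := hμ.1
  have : IsFiniteMeasure ρ := isFiniteMeasure_of_le μ hρμ
  have hρ_toFinite : ρ ≪ α.toFinite.prod β.toFinite :=
    hρ.trans ((absolutelyContinuous_toFinite α).prod (absolutelyContinuous_toFinite β))
  obtain ⟨A, hA, hA_tendsto⟩ := exists_measurableSet_restrict_le_tendsto μ hρ_toFinite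
  refine le_of_tendsto' ((ENNReal.tendsto_toReal (by finiteness)).comp hA_tendsto) fun k => ?_
  obtain ⟨hAk, hμAk⟩ := hA k
  rw [← Measure.prod_smul_left] at hμAk
  have : IsFiniteMeasure ((k : ℝ≥0∞) • α.toFinite) := Measure.smul_finite _ (by finiteness)
  exact (ENNReal.toReal_mono (by finiteness) (hρμ (A k))).trans (hμ.measureReal_le_liminf hAk hμAk)

/-- For a permuton μ with absolutely continuous part μ_ac (in the Lebesgue decomposition
with respect to 2-dimensional Lebesgue measure),
liminf H_n(μ)/(n log n) ≥ ‖μ_ac‖. -/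
theorem liminf_samplingEntropy_ge_acPart_mass
    (μ : Measure (ℝ × ℝ)) (hμ : IsPermuton μ) :
    ((volume.withDensity (μ.rnDeriv volume)) Set.univ).toReal ≤
      Filter.liminf (fun n : ℕ => samplingEntropy μ n / (n * Real.log n)) atTop := by
  exact liminf_samplingEntropy_ge_acPart_mass_general hμ.isPrePermuton
    (Measure.withDensity_rnDeriv_le μ volume) (withDensity_absolutelyContinuous volume _)
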